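/- arXiv:math/0004153 — 2 statements merged into one kernel-verified Lean document; each statement's English description precedes it below -/
import Mathlib

section
/- Fix m > 0 and let μ, ν : (2m, ∞) → ℝ be twice differentiable. For the diagonal metric g = diag(e^{μ(ρ)}, ρ², ρ² sin²θ, e^{ν(ρ)}) in coordinates (ρ,θ,φ,τ) on ρ > 2m, 0 < θ < π, the covariant Riemann–Christoffel curvature components satisfy: R_{1212} = ½ ρ μ′; R_{1313} = ½ ρ sin²θ μ′; R_{2323} = ρ² sin²θ (1 − e^{−μ}); R_{1414} = ½ e^{ν} ( ½(μ′ν′ − (ν′)²) − ν″ ); R_{2424} = −½ ρ e^{ν−μ} ν′. -/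
noncomputable section

/-- Partial derivative of a scalar function on `ℝ⁴` in the `i`-th coordinate direction. -/
def pd (f : (Fin 4 → ℝ) → ℝ) (i : Fin 4) (x : Fin 4 → ℝ) : ℝ :=
  fderiv ℝ f x (Pi.single i 1)

/-- Christoffel symbols of the first kind,
`Γ_{αβ,γ} = ½ (∂_{q^α} g_{βγ} + ∂_{q^β} g_{αγ} - ∂_{q^γ} g_{αβ})`. -/
def Γ1 (g : (Fin 4 → ℝ) → Matrix (Fin 4) (Fin 4) ℝ) (α β γ : Fin 4) (x : Fin 4 → ℝ) : ℝ :=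
  (1 / 2) * (pd (fun y => g y β γ) α x + pd (fun y => g y α γ) β x - pd (fun y => g y α β) γ x)

/-- Covariant Riemann–Christoffel curvature components
`R_{αβδγ} = ∂_{q^δ} Γ_{βγ,α} - ∂_{q^γ} Γ_{βδ,α} + Σ_{λσ} g^{λσ} (Γ_{βδ,λ} Γ_{αγ,σ} - Γ_{βγ,λ} Γ_{αδ,σ})`. -/
def Rcov (g : (Fin 4 → ℝ) → Matrix (Fin 4) (Fin 4) ℝ) (α β δ γ : Fin 4) (x : Fin 4 → ℝ) : ℝ :=
  pd (Γ1 g β γ α) δ x - pd (Γ1 g β δ α) γ x +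
    ∑ lam, ∑ sig, (g x)⁻¹ lam sig *
      (Γ1 g β δ lam x * Γ1 g α γ sig x - Γ1 g β γ lam x * Γ1 g α δ sig x)

/-- The spherically symmetric diagonal metric
`g = diag (e^{μ(ρ)}, ρ², ρ² sin² θ, e^{ν(ρ)})` in coordinates `(ρ, θ, φ, τ) = (x 0, x 1, x 2, x 3)`. -/
def gSph (μ ν : ℝ → ℝ) (x : Fin 4 → ℝ) : Matrix (Fin 4) (Fin 4) ℝ :=
  Matrix.diagonal
    ![Real.exp (μ (x 0)), (x 0) ^ 2, (x 0) ^ 2 * Real.sin (x 1) ^ 2, Real.exp (ν (x 0))]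

theorem pd_prod (A B : ℝ → ℝ) (a b : ℝ) (x : Fin 4 → ℝ) (i : Fin 4)
    (hA : HasDerivAt A a (x 0)) (hB : HasDerivAt B b (x 1)) :
    pd (fun y => A (y 0) * B (y 1)) i x =
      ![a * B (x 1), A (x 0) * b, 0, 0] i := by
  have h0 : HasFDerivAt (fun y : Fin 4 → ℝ => y 0) (ContinuousLinearMap.proj (R := ℝ) (φ := fun _ : Fin 4 => ℝ) 0) x :=
    hasFDerivAt_apply 0 x
  have h1 : HasFDerivAt (fun y : Fin 4 → ℝ => y 1) (ContinuousLinearMap.proj (R := ℝ) (φ := fun _ : Fin 4 => ℝ) 1) x :=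
    hasFDerivAt_apply 1 x
  have hA' : HasFDerivAt (fun y : Fin 4 → ℝ => A (y 0)) _ x := hA.comp_hasFDerivAt x h0
  have hB' : HasFDerivAt (fun y : Fin 4 → ℝ => B (y 1)) _ x := hB.comp_hasFDerivAt x h1
  have h := (hA'.mul hB').fderiv
  have h' : fderiv ℝ (fun y : Fin 4 → ℝ => A (y 0) * B (y 1)) x = _ := h
  unfold pd
  rw [h']
  fin_cases i <;> simp [Pi.single_apply] <;> ring

theorem pd_congr {f g : (Fin 4 → ℝ) → ℝ} {c : ℝ} (h : ∀ y : Fin 4 → ℝ, c < y 0 → f y = g y)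
    (i : Fin 4) (x : Fin 4 → ℝ) (hx : c < x 0) : pd f i x = pd g i x := by
  have ho : IsOpen {y : Fin 4 → ℝ | c < y 0} := isOpen_lt continuous_const (continuous_apply 0)
  have : f =ᶠ[nhds x] g := by
    filter_upwards [ho.mem_nhds hx] with y hy using h y hy
  unfold pd
  rw [this.fderiv_eq]

theorem pd_zero (i : Fin 4) (x : Fin 4 → ℝ) : pd (fun _ => 0) i x = 0 := by
  simp [pd]

theorem pd_gSph (μ ν : ℝ → ℝ) (x : Fin 4 → ℝ) (hμ : DifferentiableAt ℝ μ (x 0))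
    (hν : DifferentiableAt ℝ ν (x 0)) (i j k : Fin 4) :
    pd (fun y => gSph μ ν y i j) k x = if i = j then
      (![![Real.exp (μ (x 0)) * deriv μ (x 0), 0, 0, 0],
        ![2 * x 0, 0, 0, 0],
        ![2 * x 0 * Real.sin (x 1) ^ 2, x 0 ^ 2 * (2 * Real.sin (x 1) * Real.cos (x 1)), 0, 0],
        ![Real.exp (ν (x 0)) * deriv ν (x 0), 0, 0, 0]] : Fin 4 → Fin 4 → ℝ) i k else 0 := by
  have h1 : HasDerivAt (fun _ : ℝ => (1 : ℝ)) 0 (x 1) := hasDerivAt_const _ _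
  have hs : HasDerivAt (fun t : ℝ => Real.sin t ^ 2) (2 * Real.sin (x 1) * Real.cos (x 1)) (x 1) := by
    simpa using (Real.hasDerivAt_sin (x 1)).fun_pow 2
  have hq : HasDerivAt (fun t : ℝ => t ^ 2) (2 * x 0) (x 0) := by
    simpa using hasDerivAt_pow 2 (x 0)
  by_cases hij : i = j
  · subst hij
    rw [if_pos rfl]
    have e0 := pd_prod _ _ _ _ x k hμ.hasDerivAt.exp h1
    have e1 := pd_prod _ _ _ _ x k hq h1
    have e2 := pd_prod _ _ _ _ x k hq hs
    have e3 := pd_prod _ _ _ _ x k hν.hasDerivAt.exp h1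
    simp only [mul_one, mul_zero] at e0 e1 e2 e3
    fin_cases i
    · simpa [gSph] using e0
    · simpa [gSph] using e1
    · simpa [gSph] using e2
    · simpa [gSph] using e3
  · rw [if_neg hij]
    simp only [gSph, Matrix.diagonal_apply_ne _ hij]
    exact pd_zero k x

theorem gSph_inv (μ ν : ℝ → ℝ) (x : Fin 4 → ℝ) (h0 : x 0 ≠ 0) (h1 : Real.sin (x 1) ≠ 0) :
    (gSph μ ν x)⁻¹ = Matrix.diagonal ![(Real.exp (μ (x 0)))⁻¹, ((x 0) ^ 2)⁻¹,
      ((x 0) ^ 2 * Real.sin (x 1) ^ 2)⁻¹, (Real.exp (ν (x 0)))⁻¹] := by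
  apply Matrix.inv_eq_right_inv
  rw [gSph, Matrix.diagonal_mul_diagonal, ← Matrix.diagonal_one]
  congr 1
  funext i
  fin_cases i <;> simp [h0] <;> field_simp

/-- for the metric `diag (e^{μ(ρ)}, ρ², ρ² sin² θ, e^{ν(ρ)})` on `ρ > 2m`,
`0 < θ < π` with `μ, ν` twice differentiable, the covariant Riemann–Christoffel curvature
components satisfy `R₁₂₁₂ = ½ ρ μ'`, `R₁₃₁₃ = ½ ρ sin² θ μ'`,
`R₂₃₂₃ = ρ² sin² θ (1 - e^{-μ})`, `R₁₄₁₄ = ½ e^ν (½ (μ' ν' - ν'²) - ν'')`,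
`R₂₄₂₄ = -½ ρ e^{ν - μ} ν'`.  (Indices here are 0-based.) -/
theorem riemann_components_spherical (m : ℝ) (hm : 0 < m) (μ ν : ℝ → ℝ)
    (hμ : DifferentiableOn ℝ μ (Set.Ioi (2 * m)))
    (hμ' : DifferentiableOn ℝ (deriv μ) (Set.Ioi (2 * m)))
    (hν : DifferentiableOn ℝ ν (Set.Ioi (2 * m)))
    (hν' : DifferentiableOn ℝ (deriv ν) (Set.Ioi (2 * m))) :
    ∀ x : Fin 4 → ℝ, 2 * m < x 0 → 0 < x 1 → x 1 < Real.pi →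
      Rcov (gSph μ ν) 0 1 0 1 x = (1 / 2) * (x 0) * deriv μ (x 0) ∧
      Rcov (gSph μ ν) 0 2 0 2 x = (1 / 2) * (x 0) * Real.sin (x 1) ^ 2 * deriv μ (x 0) ∧
      Rcov (gSph μ ν) 1 2 1 2 x =
        (x 0) ^ 2 * Real.sin (x 1) ^ 2 * (1 - Real.exp (-μ (x 0))) ∧
      Rcov (gSph μ ν) 0 3 0 3 x =
        (1 / 2) * Real.exp (ν (x 0)) *
          ((1 / 2) * (deriv μ (x 0) * deriv ν (x 0) - (deriv ν (x 0)) ^ 2) -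
            deriv (deriv ν) (x 0)) ∧
      Rcov (gSph μ ν) 1 3 1 3 x =
        -((1 / 2) * (x 0) * Real.exp (ν (x 0) - μ (x 0)) * deriv ν (x 0)) := by
  intro x hx hx1 hx2
  have hx0 : x 0 ≠ 0 := by linarith
  have hs : Real.sin (x 1) ≠ 0 := (Real.sin_pos_of_pos_of_lt_pi hx1 hx2).ne'
  have dμ : ∀ t, 2 * m < t → DifferentiableAt ℝ μ t := fun t ht =>
    hμ.differentiableAt (Ioi_mem_nhds ht)
  have dν : ∀ t, 2 * m < t → DifferentiableAt ℝ ν t := fun t ht =>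
    hν.differentiableAt (Ioi_mem_nhds ht)
  have dν' : DifferentiableAt ℝ (deriv ν) (x 0) := hν'.differentiableAt (Ioi_mem_nhds hx)
  have P : ∀ y : Fin 4 → ℝ, 2 * m < y 0 → ∀ i j k, _ := fun y hy i j k =>
    pd_gSph μ ν y (dμ _ hy) (dν _ hy) i j k
  have c1 : HasDerivAt (fun _ : ℝ => (1 : ℝ)) 0 (x 1) := hasDerivAt_const _ _
  have hsq : HasDerivAt (fun t : ℝ => Real.sin t ^ 2)
      (2 * Real.sin (x 1) * Real.cos (x 1)) (x 1) := by
    simpa using (Real.hasDerivAt_sin (x 1)).fun_pow 2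
  have hsc : HasDerivAt (fun t : ℝ => Real.sin t * Real.cos t)
      (Real.cos (x 1) * Real.cos (x 1) + Real.sin (x 1) * (-Real.sin (x 1))) (x 1) :=
    (Real.hasDerivAt_sin (x 1)).mul (Real.hasDerivAt_cos (x 1))
  have hid : HasDerivAt (fun t : ℝ => -t) (-1) (x 0) := hasDerivAt_neg _
  have hq : HasDerivAt (fun t : ℝ => -t ^ 2) (-(2 * x 0)) (x 0) := by
    simpa using (hasDerivAt_pow 2 (x 0)).fun_neg
  have hE : HasDerivAt (fun t : ℝ => -(1 / 2) * (Real.exp (ν t) * deriv ν t))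
      (-(1 / 2) * (Real.exp (ν (x 0)) * deriv ν (x 0) * deriv ν (x 0) +
        Real.exp (ν (x 0)) * deriv (deriv ν) (x 0))) (x 0) :=
    (((dν _ hx).hasDerivAt.exp).mul dν'.hasDerivAt).const_mul _
  -- derivatives of the Christoffel symbols
  have A1 : pd (Γ1 (gSph μ ν) 1 1 0) 0 x = -1 := by
    rw [pd_congr (c := 2 * m) (g := fun y => (fun t : ℝ => -t) (y 0) * (fun _ => 1) (y 1)) _ 0 x hx,
      pd_prod _ _ _ _ x 0 hid c1]
    · simp
    · intro y hy; simp [Γ1, P y hy]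
  have A2 : pd (Γ1 (gSph μ ν) 2 2 0) 0 x = -Real.sin (x 1) ^ 2 := by
    rw [pd_congr (c := 2 * m) (g := fun y => (fun t : ℝ => -t) (y 0) *
      (fun t => Real.sin t ^ 2) (y 1)) _ 0 x hx, pd_prod _ _ _ _ x 0 hid hsq]
    · simp
    · intro y hy; simp [Γ1, P y hy]; ring
  have A3 : pd (Γ1 (gSph μ ν) 2 2 1) 1 x = -x 0 ^ 2 *
      (Real.cos (x 1) * Real.cos (x 1) + Real.sin (x 1) * (-Real.sin (x 1))) := by
    rw [pd_congr (c := 2 * m) (g := fun y => (fun t : ℝ => -t ^ 2) (y 0) *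
      (fun t => Real.sin t * Real.cos t) (y 1)) _ 1 x hx, pd_prod _ _ _ _ x 1 hq hsc]
    · simp
    · intro y hy; simp [Γ1, P y hy]; ring
  have A4 : pd (Γ1 (gSph μ ν) 3 3 0) 0 x = -(1 / 2) * (Real.exp (ν (x 0)) * deriv ν (x 0) *
      deriv ν (x 0) + Real.exp (ν (x 0)) * deriv (deriv ν) (x 0)) := by
    rw [pd_congr (c := 2 * m) (g := fun y => (fun t : ℝ => -(1 / 2) * (Real.exp (ν t) * deriv ν t))
      (y 0) * (fun _ => 1) (y 1)) _ 0 x hx, pd_prod _ _ _ _ x 0 hE c1]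
    · simp
    · intro y hy; simp [Γ1, P y hy]
  have Z : ∀ a b c d : Fin 4, (∀ y : Fin 4 → ℝ, 2 * m < y 0 → Γ1 (gSph μ ν) a b c y = 0) →
      pd (Γ1 (gSph μ ν) a b c) d x = 0 := by
    intro a b c d h
    rw [pd_congr (c := 2 * m) (g := fun _ => 0) h d x hx, pd_zero]
  have Z1 : pd (Γ1 (gSph μ ν) 1 0 0) 1 x = 0 := Z _ _ _ _ (by intro y hy; simp [Γ1, P y hy])
  have Z2 : pd (Γ1 (gSph μ ν) 2 0 0) 2 x = 0 := Z _ _ _ _ (by intro y hy; simp [Γ1, P y hy])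
  have Z3 : pd (Γ1 (gSph μ ν) 2 1 1) 2 x = 0 := Z _ _ _ _ (by intro y hy; simp [Γ1, P y hy])
  have Z4 : pd (Γ1 (gSph μ ν) 3 0 0) 3 x = 0 := Z _ _ _ _ (by intro y hy; simp [Γ1, P y hy])
  have Z5 : pd (Γ1 (gSph μ ν) 3 3 1) 1 x = 0 := Z _ _ _ _ (by intro y hy; simp [Γ1, P y hy])
  have Z6 : pd (Γ1 (gSph μ ν) 3 1 1) 3 x = 0 := Z _ _ _ _ (by intro y hy; simp [Γ1, P y hy])
  have hm0 := (Real.exp_pos (μ (x 0))).ne'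
  have hn0 := (Real.exp_pos (ν (x 0))).ne'
  refine ⟨?_, ?_, ?_, ?_, ?_⟩
  · rw [Rcov, A1, Z1, gSph_inv μ ν x hx0 hs]
    simp [Fin.sum_univ_four, Matrix.diagonal_apply, Γ1, P x hx]
    field_simp
    try ring
  · rw [Rcov, A2, Z2, gSph_inv μ ν x hx0 hs]
    simp [Fin.sum_univ_four, Matrix.diagonal_apply, Γ1, P x hx]
    field_simp
    try ring
  · rw [Rcov, A3, Z3, gSph_inv μ ν x hx0 hs, Real.exp_neg]
    simp [Fin.sum_univ_four, Matrix.diagonal_apply, Γ1, P x hx]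
    field_simp
    try ring
  · rw [Rcov, A4, Z4, gSph_inv μ ν x hx0 hs]
    simp [Fin.sum_univ_four, Matrix.diagonal_apply, Γ1, P x hx]
    field_simp
    try ring
  · rw [Rcov, Z5, Z6, gSph_inv μ ν x hx0 hs, Real.exp_sub]
    simp [Fin.sum_univ_four, Matrix.diagonal_apply, Γ1, P x hx]
    field_simp
    try ring


end
end

section
/- Fix m > 0 and take μ(ρ) = −ln(1 − 2m/ρ) and ν(ρ) = −μ(ρ) on ρ > 2m (the Schwarzschild metric g = diag((1−2m/ρ)^{−1}, ρ², ρ² sin²θ, 1−2m/ρ)). Then on ρ > 2m, 0 < θ < π, one has R_{1313}·R_{1414}·R_{2323}·R_{2424} = (det g)²·(2m²/ρ⁶)², where det g = ρ⁴ sin²θ; hence the curvature κ = √(R_{1313} R_{1414} R_{2323} R_{2424}) / det g equals 2m²/ρ⁶. -/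
noncomputable section

theorem pd_of_prod {f : (Fin 4 → ℝ) → ℝ} {a b : ℝ → ℝ} {a' b' : ℝ} {x : Fin 4 → ℝ}
    (hf : ∀ᶠ y in nhds x, f y = a (y 0) * b (y 1))
    (ha : HasDerivAt a a' (x 0)) (hb : HasDerivAt b b' (x 1)) (i : Fin 4) :
    pd f i x = ![a' * b (x 1), a (x 0) * b', 0, 0] i := by
  have h0 : HasFDerivAt (fun y : Fin 4 → ℝ => y 0)
      (ContinuousLinearMap.proj (R := ℝ) (φ := fun _ : Fin 4 => ℝ) 0) x :=
    (ContinuousLinearMap.proj (R := ℝ) (φ := fun _ : Fin 4 => ℝ) 0).hasFDerivAt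
  have h1 : HasFDerivAt (fun y : Fin 4 → ℝ => y 1)
      (ContinuousLinearMap.proj (R := ℝ) (φ := fun _ : Fin 4 => ℝ) 1) x :=
    (ContinuousLinearMap.proj (R := ℝ) (φ := fun _ : Fin 4 => ℝ) 1).hasFDerivAt
  have A := ha.comp_hasFDerivAt x h0
  have B := hb.comp_hasFDerivAt x h1
  have C := (A.mul B).congr_of_eventuallyEq (f₁ := f) hf
  rw [pd, C.fderiv]
  fin_cases i <;> simp [mul_comm]

theorem pd_zero_of_eventually {f : (Fin 4 → ℝ) → ℝ} {x : Fin 4 → ℝ}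
    (hf : ∀ᶠ y in nhds x, f y = 0) (i : Fin 4) : pd f i x = 0 := by
  have := pd_of_prod (f := f) (a := fun _ => 0) (b := fun _ => 0) (x := x)
    (by simpa using hf) (hasDerivAt_const _ _) (hasDerivAt_const _ _) i
  rw [this]; fin_cases i <;> simp

/-- derivative table: `dG m x i b = ∂_i g_bb`. -/
def dG (m : ℝ) (x : Fin 4 → ℝ) (b : Fin 4) : Fin 4 → ℝ :=
  ![![-(2 * m) / (x 0 - 2 * m) ^ 2, 0, 0, 0],
    ![2 * x 0, 0, 0, 0],
    ![2 * x 0 * Real.sin (x 1) ^ 2, (x 0) ^ 2 * (2 * Real.sin (x 1) * Real.cos (x 1)), 0, 0],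
    ![2 * m / (x 0) ^ 2, 0, 0, 0]] b

theorem ev_gt {m : ℝ} {x : Fin 4 → ℝ} (h : 2 * m < x 0) : ∀ᶠ y in nhds x, 2 * m < y 0 :=
  (isOpen_lt continuous_const (continuous_apply 0)).mem_nhds h

section
variable {m : ℝ} {μ ν : ℝ → ℝ} 

theorem exp_mu (hm : 0 < m) (hμdef : ∀ ρ : ℝ, μ ρ = -Real.log (1 - 2 * m / ρ)) {r : ℝ} (h : 2 * m < r) :
    Real.exp (μ r) = r / (r - 2 * m) := by
  have hr : 0 < r := by linarith
  have hr' : r - 2 * m ≠ 0 := by linarith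
  have : 0 < 1 - 2 * m / r := by rw [sub_pos, div_lt_one hr]; exact h
  rw [hμdef, Real.exp_neg, Real.exp_log this]
  field_simp

theorem exp_nu (hm : 0 < m) (hμdef : ∀ ρ : ℝ, μ ρ = -Real.log (1 - 2 * m / ρ))
    (hνdef : ∀ ρ : ℝ, ν ρ = -μ ρ) {r : ℝ} (h : 2 * m < r) :
    Real.exp (ν r) = (r - 2 * m) / r := by
  rw [hνdef, Real.exp_neg, exp_mu hm hμdef h, inv_div]

theorem pd_g (hm : 0 < m) (hμdef : ∀ ρ : ℝ, μ ρ = -Real.log (1 - 2 * m / ρ))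
    (hνdef : ∀ ρ : ℝ, ν ρ = -μ ρ) {x : Fin 4 → ℝ} (h : 2 * m < x 0) (a b i : Fin 4) :
    pd (fun y => gSph μ ν y a b) i x = if a = b then dG m x b i else 0 := by
  have hr : x 0 ≠ 0 := by linarith
  have hr' : x 0 - 2 * m ≠ 0 := by linarith
  split_ifs with hab
  · subst hab
    fin_cases a
    · rw [pd_of_prod (a := fun r => r / (r - 2 * m)) (b := fun _ => 1) (b' := 0)
        ((ev_gt h).mono fun y hy => by simp [gSph, exp_mu hm hμdef hy])
        ((hasDerivAt_id (x 0)).div ((hasDerivAt_id (x 0)).sub_const (2 * m)) hr')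
        (hasDerivAt_const _ _)]
      fin_cases i <;> simp [dG]
    · rw [pd_of_prod (a := fun r => r ^ 2) (b := fun _ => 1) (b' := 0)
        (Filter.Eventually.of_forall fun y => by simp [gSph])
        (hasDerivAt_pow 2 (x 0)) (hasDerivAt_const _ _)]
      fin_cases i <;> simp [dG]
    · rw [pd_of_prod (a := fun r => r ^ 2) (b := fun t => Real.sin t ^ 2)
        (Filter.Eventually.of_forall fun y => by simp [gSph])
        (hasDerivAt_pow 2 (x 0)) ((Real.hasDerivAt_sin (x 1)).pow 2)]
      fin_cases i <;> simp [dG]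
    · rw [pd_of_prod (a := fun r => (r - 2 * m) / r) (b := fun _ => 1) (b' := 0)
        ((ev_gt h).mono fun y hy => by simp [gSph, exp_nu hm hμdef hνdef hy])
        (((hasDerivAt_id (x 0)).sub_const (2 * m)).div (hasDerivAt_id (x 0)) hr)
        (hasDerivAt_const _ _)]
      fin_cases i <;> simp [dG]
  · exact pd_zero_of_eventually
      (Filter.Eventually.of_forall fun y => by simp [gSph, Matrix.diagonal_apply_ne _ hab]) i

theorem G1_eq (hm : 0 < m) (hμdef : ∀ ρ : ℝ, μ ρ = -Real.log (1 - 2 * m / ρ))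
    (hνdef : ∀ ρ : ℝ, ν ρ = -μ ρ) {x : Fin 4 → ℝ} (h : 2 * m < x 0) (a b c : Fin 4) :
    Γ1 (gSph μ ν) a b c x = (1 / 2) * ((if b = c then dG m x c a else 0)
      + (if a = c then dG m x c b else 0) - (if a = b then dG m x b c else 0)) := by
  rw [Γ1, pd_g hm hμdef hνdef h, pd_g hm hμdef hνdef h, pd_g hm hμdef hνdef h]

theorem inv_g (hm : 0 < m) (hμdef : ∀ ρ : ℝ, μ ρ = -Real.log (1 - 2 * m / ρ))
    (hνdef : ∀ ρ : ℝ, ν ρ = -μ ρ) {x : Fin 4 → ℝ} (h : 2 * m < x 0)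
    (hs : Real.sin (x 1) ≠ 0) :
    (gSph μ ν x)⁻¹ = Matrix.diagonal ![(x 0 - 2 * m) / x 0, ((x 0) ^ 2)⁻¹,
      ((x 0) ^ 2 * Real.sin (x 1) ^ 2)⁻¹, x 0 / (x 0 - 2 * m)] := by
  have hr : x 0 ≠ 0 := by linarith
  have hr' : x 0 - 2 * m ≠ 0 := by linarith
  apply Matrix.inv_eq_right_inv
  rw [gSph, Matrix.diagonal_mul_diagonal, exp_mu hm hμdef h, exp_nu hm hμdef hνdef h,
    ← Matrix.diagonal_one]
  congr 1
  funext i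
  fin_cases i <;> simp <;> field_simp

theorem Rc (hm : 0 < m) (hμdef : ∀ ρ : ℝ, μ ρ = -Real.log (1 - 2 * m / ρ))
    (hνdef : ∀ ρ : ℝ, ν ρ = -μ ρ) {x : Fin 4 → ℝ} (h : 2 * m < x 0)
    (hs : Real.sin (x 1) ≠ 0) :
    Rcov (gSph μ ν) 0 2 0 2 x = - m * Real.sin (x 1) ^ 2 / (x 0 - 2 * m) ∧
    Rcov (gSph μ ν) 0 3 0 3 x = 2 * m / x 0 ^ 3 ∧
    Rcov (gSph μ ν) 1 2 1 2 x = 2 * m * x 0 * Real.sin (x 1) ^ 2 ∧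
    Rcov (gSph μ ν) 1 3 1 3 x = - m * (x 0 - 2 * m) / x 0 ^ 2 := by
  have hr : x 0 ≠ 0 := by linarith
  have hr' : x 0 - 2 * m ≠ 0 := by linarith
  have hcos : Real.cos (x 1) ^ 2 = 1 - Real.sin (x 1) ^ 2 := Real.cos_sq' _
  have z {a b c : Fin 4} (i : Fin 4) (hz : ∀ y : Fin 4 → ℝ, (1 / 2) * ((if b = c then dG m y c a else 0)
      + (if a = c then dG m y c b else 0) - (if a = b then dG m y b c else 0)) = 0) :
      pd (Γ1 (gSph μ ν) a b c) i x = 0 :=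
    pd_zero_of_eventually ((ev_gt h).mono fun y hy => by rw [G1_eq hm hμdef hνdef hy, hz]) i
  refine ⟨?_, ?_, ?_, ?_⟩
  · rw [Rcov, z (a := 2) (b := 0) (c := 0) 2 (by intro y; simp [dG]),
      pd_of_prod (f := Γ1 (gSph μ ν) 2 2 0) (a := fun r => -r) (b := fun t => Real.sin t ^ 2)
        ((ev_gt h).mono fun y hy => by rw [G1_eq hm hμdef hνdef hy]; simp [dG]; ring)
        (hasDerivAt_neg (x 0)) ((Real.hasDerivAt_sin (x 1)).pow 2), inv_g hm hμdef hνdef h hs]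
    simp [Fin.sum_univ_four, G1_eq hm hμdef hνdef h, dG]
    field_simp
    ring
  · rw [Rcov, z (a := 3) (b := 0) (c := 0) 3 (by intro y; simp [dG]),
      pd_of_prod (f := Γ1 (gSph μ ν) 3 3 0) (a := fun r => -m / r ^ 2) (b := fun t => 1) (b' := 0)
        ((ev_gt h).mono fun y hy => by rw [G1_eq hm hμdef hνdef hy]; simp [dG]; ring)
        ((hasDerivAt_const (x 0) (-m)).div (hasDerivAt_pow 2 (x 0)) (pow_ne_zero 2 hr))
        (hasDerivAt_const _ _), inv_g hm hμdef hνdef h hs]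
    simp [Fin.sum_univ_four, G1_eq hm hμdef hνdef h, dG]
    field_simp
    ring
  · rw [Rcov, z (a := 2) (b := 1) (c := 1) 2 (by intro y; simp [dG]),
      pd_of_prod (f := Γ1 (gSph μ ν) 2 2 1) (a := fun r => -r ^ 2)
        (b := fun t => Real.sin t * Real.cos t)
        ((ev_gt h).mono fun y hy => by rw [G1_eq hm hμdef hνdef hy]; simp [dG]; ring)
        (hasDerivAt_pow 2 (x 0)).neg ((Real.hasDerivAt_sin (x 1)).mul (Real.hasDerivAt_cos (x 1))),
      inv_g hm hμdef hνdef h hs]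
    simp [Fin.sum_univ_four, G1_eq hm hμdef hνdef h, dG]
    field_simp
    ring_nf
  · rw [Rcov, z (a := 3) (b := 1) (c := 1) 3 (by intro y; simp [dG]),
      z (a := 3) (b := 3) (c := 1) 1 (by intro y; simp [dG]), inv_g hm hμdef hνdef h hs]
    simp [Fin.sum_univ_four, G1_eq hm hμdef hνdef h, dG]
    field_simp

end

/-- for the Schwarzschild metric, i.e. the spherically symmetric metric with
`μ(ρ) = -ln (1 - 2m/ρ)` and `ν = -μ` (so `g = diag ((1 - 2m/ρ)⁻¹, ρ², ρ² sin² θ, 1 - 2m/ρ)`),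
on `ρ > 2m`, `0 < θ < π` one has `R₁₃₁₃ R₁₄₁₄ R₂₃₂₃ R₂₄₂₄ = (det g)² (2m²/ρ⁶)²` with
`det g = ρ⁴ sin² θ`; hence the curvature
`κ = √(R₁₃₁₃ R₁₄₁₄ R₂₃₂₃ R₂₄₂₄) / det g` equals `2m²/ρ⁶`.  (Indices here are 0-based.) -/
theorem schwarzschild_curvature (m : ℝ) (hm : 0 < m) (μ ν : ℝ → ℝ)
    (hμdef : ∀ ρ : ℝ, μ ρ = -Real.log (1 - 2 * m / ρ))
    (hνdef : ∀ ρ : ℝ, ν ρ = -μ ρ) :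
    ∀ x : Fin 4 → ℝ, 2 * m < x 0 → 0 < x 1 → x 1 < Real.pi →
      Rcov (gSph μ ν) 0 2 0 2 x * Rcov (gSph μ ν) 0 3 0 3 x *
          Rcov (gSph μ ν) 1 2 1 2 x * Rcov (gSph μ ν) 1 3 1 3 x =
        ((gSph μ ν x).det) ^ 2 * (2 * m ^ 2 / (x 0) ^ 6) ^ 2 ∧
      (gSph μ ν x).det = (x 0) ^ 4 * Real.sin (x 1) ^ 2 ∧
      Real.sqrt (Rcov (gSph μ ν) 0 2 0 2 x * Rcov (gSph μ ν) 0 3 0 3 x *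
            Rcov (gSph μ ν) 1 2 1 2 x * Rcov (gSph μ ν) 1 3 1 3 x) /
          (gSph μ ν x).det =
        2 * m ^ 2 / (x 0) ^ 6 := by
  intro x h h1 h2
  have hs : 0 < Real.sin (x 1) := Real.sin_pos_of_pos_of_lt_pi h1 h2
  have hr : 0 < x 0 := by linarith
  have hr' : x 0 - 2 * m ≠ 0 := by linarith
  obtain ⟨e1, e2, e3, e4⟩ := Rc hm hμdef hνdef h hs.ne'
  have hd : (gSph μ ν x).det = (x 0) ^ 4 * Real.sin (x 1) ^ 2 := by
    rw [gSph, Matrix.det_diagonal, exp_mu hm hμdef h, exp_nu hm hμdef hνdef h]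
    simp [Fin.prod_univ_four]
    field_simp
  have hp : Rcov (gSph μ ν) 0 2 0 2 x * Rcov (gSph μ ν) 0 3 0 3 x *
          Rcov (gSph μ ν) 1 2 1 2 x * Rcov (gSph μ ν) 1 3 1 3 x =
        ((gSph μ ν x).det) ^ 2 * (2 * m ^ 2 / (x 0) ^ 6) ^ 2 := by
    rw [e1, e2, e3, e4, hd]
    generalize hk : x 0 - 2 * m = k at hr'
    field_simp
    try ring
  refine ⟨hp, hd, ?_⟩
  rw [hp, ← mul_pow, hd, Real.sqrt_sq (by positivity)]
  field_simp

end
end
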